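/- arXiv:2311.15184 — 2 statements merged into one kernel-verified Lean document; each statement's English description precedes it below -/
import Mathlib

section
/- For k = 2, every real λ > 0, and every integer n ≥ 1, the n-th factorial moment of the Poisson distribution of order 2 is M_{(n)}(2,λ) = Σ_{s=0}^{⌊n/2⌋} [n!/((n−2s)!·s!)] · κ₁^{n−2s} · κ₂^{s} · λ^{n−s}, where κ₁ = C(3,2) = 3 and κ₂ = C(3,3) = 1. -/
open scoped BigOperators

/-- The finite set of `k`-tuples `(n₁, …, n_k)` of nonnegative integers
(encoded as functions `Fin k → Fin (m+1)`) satisfying `n₁ + 2 n₂ + ⋯ + k n_k = m`. -/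
def orderkTuples (k m : ℕ) : Finset (Fin k → Fin (m + 1)) :=
  Finset.univ.filter (fun f => ∑ j : Fin k, (j.1 + 1) * (f j).1 = m)

/-- The probability mass function of the Poisson distribution of order `k`. -/
noncomputable def poissonOrderK (k : ℕ) (lam : ℝ) (m : ℕ) : ℝ :=
  Real.exp (-(k * lam)) *
    ∑ f ∈ orderkTuples k m, ∏ j : Fin k, lam ^ (f j).1 / (f j).1.factorial

/-! The probability generating function `∑ m, P_m z ^ m = exp (λ ∑_{j=1}^k (z ^ j - 1))` is entire,
and its Taylor coefficients at `z = 1` are the factorial moments divided by `n!`. Substituting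
`z = 1 + t` turns the exponent into `λ ∑_{j=1}^k C(k+1, j+1) t ^ j`, again a polynomial without
constant term, so these coefficients are given by the same sum over tuples that defines `P_m`. -/

open Finset
open scoped Nat Topology

section ProductOfSeries

variable {R : Type*} [NormedCommRing R]

lemma summable_norm_prod_pi {k : ℕ} {α : Fin k → Type*} {f : ∀ i, α i → R}
    (hf : ∀ i, Summable fun x => ‖f i x‖) :
    Summable fun g : ∀ i, α i => ‖∏ i, f i (g i)‖ := by
  induction k with
  | zero => exact .of_finite
  | succ k ih =>
    have head_mul_tail := (hf 0).mul_norm (ih fun i => hf i.succ)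
    rw [← (Fin.consEquiv α).summable_iff]
    simpa only [Function.comp_def, Fin.consEquiv_apply, Fin.prod_univ_succ, Fin.cons_zero,
      Fin.cons_succ] using head_mul_tail

lemma hasSum_prod_pi [CompleteSpace R] {k : ℕ} {α : Fin k → Type*} {f : ∀ i, α i → R}
    {a : Fin k → R} (hf : ∀ i, HasSum (f i) (a i)) (hnorm : ∀ i, Summable fun x => ‖f i x‖) :
    HasSum (fun g : ∀ i, α i => ∏ i, f i (g i)) (∏ i, a i) := by
  induction k with
  | zero => simp
  | succ k ih =>
    have tail_hasSum := ih (fun i => hf i.succ) fun i => hnorm i.succ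
    have tail_norm := summable_norm_prod_pi fun i : Fin k => hnorm i.succ
    have product_summable := summable_mul_of_summable_norm (hnorm 0) tail_norm
    have head_mul_tail := (hf 0).mul tail_hasSum product_summable
    rw [← (Fin.consEquiv α).hasSum_iff]
    simpa only [Function.comp_def, Fin.consEquiv_apply, Fin.prod_univ_succ, Fin.cons_zero,
      Fin.cons_succ] using head_mul_tail

end ProductOfSeries

section EntireSeries

lemma coeff_unique_of_hasSum_pow {𝕜 : Type*} [NontriviallyNormedField 𝕜] {a b : ℕ → 𝕜} {G : 𝕜 → 𝕜}
    (ha : ∀ᶠ t in 𝓝 0, HasSum (fun n => a n * t ^ n) (G t))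
    (hb : ∀ᶠ t in 𝓝 0, HasSum (fun n => b n * t ^ n) (G t)) : a = b := by
  have hasFPowerSeriesAt_zero {c : ℕ → 𝕜}
      (hc : ∀ᶠ t in 𝓝 0, HasSum (fun n => c n * t ^ n) (G t)) :
      HasFPowerSeriesAt G (.ofScalars 𝕜 c) 0 := by
    refine hasFPowerSeriesAt_iff.2 (hc.mono fun t ht => ?_)
    simpa only [zero_add, smul_eq_mul, mul_comm, FormalMultilinearSeries.coeff_ofScalars] using ht
  exact FormalMultilinearSeries.ofScalars_series_injective 𝕜 𝕜
    ((hasFPowerSeriesAt_zero ha).eq_formalMultilinearSeries (hasFPowerSeriesAt_zero hb))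

/-- For `n > m` the exponent `m - n` is truncated to `0`, but then the binomial coefficient
vanishes. -/
lemma hasSum_pow_mul_pow_mul_choose {R : Type*} [CommSemiring R] [TopologicalSpace R] (x t : R)
    (m : ℕ) : HasSum (fun n => x ^ (m - n) * t ^ n * m.choose n) ((x + t) ^ m) := by
  rw [add_comm, add_pow]
  simp only [mul_comm (t ^ _)]
  refine hasSum_sum_of_ne_finset_zero fun n hn => ?_
  rw [Nat.choose_eq_zero_of_lt (by simpa using hn), Nat.cast_zero, mul_zero]

variable {𝕜 : Type*} [RCLike 𝕜] {a b : ℕ → 𝕜} {G : 𝕜 → 𝕜}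

lemma summable_binomial_expansion (ha : ∀ z, Summable fun m => a m * z ^ m) (x t : 𝕜) :
    Summable fun p : ℕ × ℕ => a p.1 * (x ^ (p.1 - p.2) * t ^ p.2 * p.1.choose p.2) := by
  have row_norm (m : ℕ) :
      HasSum (fun n => ‖a m * (x ^ (m - n) * t ^ n * m.choose n)‖)
        (‖a m‖ * (‖x‖ + ‖t‖) ^ m) := by
    simpa [norm_mul, norm_pow] using (hasSum_pow_mul_pow_mul_choose ‖x‖ ‖t‖ m).mul_left ‖a m‖
  refine .of_norm ((summable_prod_of_nonneg fun _ => norm_nonneg _).2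
    ⟨fun m => (row_norm m).summable, ?_⟩)
  simp only [(row_norm _).tsum_eq]
  refine (ha ((‖x‖ + ‖t‖ : ℝ) : 𝕜)).norm.congr fun m => ?_
  rw [norm_mul, norm_pow, RCLike.norm_ofReal, abs_of_nonneg (by positivity)]

lemma hasSum_choose_mul_of_hasSum_add_pow {x : 𝕜} (ha : ∀ z, HasSum (fun m => a m * z ^ m) (G z))
    (hb : ∀ t, HasSum (fun n => b n * t ^ n) (G (x + t))) (n : ℕ) :
    HasSum (fun m => a m * (x ^ (m - n) * m.choose n)) (b n) := by
  have double_summable := summable_binomial_expansion (fun z => (ha z).summable) x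
  have column_summable (n : ℕ) : Summable fun m => a m * (x ^ (m - n) * m.choose n) := by
    simpa using (double_summable 1).prod_symm.prod_factor n
  -- Summing the binomial expansions of `a m * (x + t) ^ m` by columns gives a second power series
  -- in `t` for `G (x + t)`, whose coefficients must be `b`.
  have columns (t : 𝕜) :
      HasSum (fun n => (∑' m, a m * (x ^ (m - n) * m.choose n)) * t ^ n) (G (x + t)) := by
    have double_hasSum := (double_summable t).hasSum
    have rows := double_hasSum.prod_fiberwise fun m =>
      (hasSum_pow_mul_pow_mul_choose x t m).mul_left (a m)
    rw [rows.unique (ha (x + t))] at double_hasSum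
    have swapped_hasSum := (Equiv.prodComm ℕ ℕ).hasSum_iff.2 double_hasSum
    refine swapped_hasSum.prod_fiberwise fun n =>
      ((column_summable n).hasSum.mul_right (t ^ n)).congr_fun fun m => ?_
    simp only [Function.comp_apply, Equiv.prodComm_apply, Prod.swap_prod_mk]
    ring
  rw [← congrFun (coeff_unique_of_hasSum_pow (.of_forall columns) (.of_forall hb)) n]
  exact (column_summable n).hasSum

end EntireSeries

section ExpPolynomial

/-- The coefficient of `t ^ m` in `exp (∑ j, c j * t ^ (j + 1))`. The shift by one makes `c j` the
coefficient attached to the entry `n_{j+1}` of a tuple in `orderkTuples k m`. -/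
noncomputable def expPolyCoeff {k : ℕ} (c : Fin k → ℝ) (m : ℕ) : ℝ :=
  ∑ f ∈ orderkTuples k m, ∏ j, c j ^ (f j : ℕ) / (f j : ℕ)!

/-- The weight `n₁ + 2 n₂ + ⋯ + k n_k` of a tuple, without the a priori bound on its entries that
`orderkTuples` imposes. -/
def tupleWeight {k : ℕ} (g : Fin k → ℕ) : ℕ := ∑ j, (j.1 + 1) * g j

lemma le_tupleWeight {k : ℕ} (g : Fin k → ℕ) (j : Fin k) : g j ≤ tupleWeight g :=
  (Nat.le_mul_of_pos_left _ j.1.succ_pos).trans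
    (single_le_sum (f := fun i : Fin k => (i.1 + 1) * g i) (fun _ _ => Nat.zero_le _) (mem_univ j))

/-- Forgetting the bound on the entries identifies `orderkTuples k m` with the tuples of weight
`m`. -/
def orderkTuplesEquiv (k m : ℕ) : orderkTuples k m ≃ {g : Fin k → ℕ // tupleWeight g = m} where
  toFun f := ⟨fun j => f.1 j, (mem_filter.1 f.2).2⟩
  invFun g := ⟨fun j => ⟨g.1 j, Nat.lt_succ_of_le ((le_tupleWeight g.1 j).trans_eq g.2)⟩,
    mem_filter.2 ⟨mem_univ _, g.2⟩⟩
  left_inv _ := rfl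
  right_inv _ := rfl

lemma prod_mul_pow_pow_div_factorial {k : ℕ} (c : Fin k → ℝ) (z : ℝ) (g : Fin k → ℕ) :
    ∏ j, (c j * z ^ (j.1 + 1)) ^ g j / (g j)! =
      (∏ j, c j ^ g j / (g j)!) * z ^ tupleWeight g := by
  rw [tupleWeight, ← prod_pow_eq_pow_sum, ← prod_mul_distrib]
  refine prod_congr rfl fun j _ => ?_
  rw [mul_pow, pow_mul, mul_div_right_comm]

lemma hasSum_tupleWeight_fiber {k : ℕ} (c : Fin k → ℝ) (m : ℕ) :
    HasSum (fun g : {g : Fin k → ℕ // tupleWeight g = m} => ∏ j, c j ^ g.1 j / (g.1 j)!)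
      (expPolyCoeff c m) :=
  (orderkTuplesEquiv k m).hasSum_iff.1
    ((orderkTuples k m).hasSum fun f => ∏ j, c j ^ (f j : ℕ) / ((f j : ℕ)! : ℝ))

lemma hasSum_expPolyCoeff {k : ℕ} (c : Fin k → ℝ) (z : ℝ) :
    HasSum (fun m => expPolyCoeff c m * z ^ m) (Real.exp (∑ j, c j * z ^ (j.1 + 1))) := by
  have factor (j : Fin k) : HasSum (fun a : ℕ => (c j * z ^ (j.1 + 1)) ^ a / a !)
      (Real.exp (c j * z ^ (j.1 + 1))) := by
    rw [Real.exp_eq_exp_ℝ]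
    exact NormedSpace.expSeries_div_hasSum_exp _
  have product := hasSum_prod_pi factor fun j => (factor j).summable.norm
  rw [← Real.exp_sum, ← (Equiv.sigmaFiberEquiv tupleWeight).hasSum_iff] at product
  refine product.sigma fun m => ((hasSum_tupleWeight_fiber c m).mul_right (z ^ m)).congr_fun ?_
  rintro ⟨g, rfl⟩
  exact prod_mul_pow_pow_div_factorial c z g

lemma expPolyCoeff_two (c : Fin 2 → ℝ) (m : ℕ) :
    expPolyCoeff c m =
      ∑ s ∈ range (m / 2 + 1), c 0 ^ (m - 2 * s) / (m - 2 * s)! * (c 1 ^ s / s !) := by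
  have mem_iff (f : Fin 2 → Fin (m + 1)) :
      f ∈ orderkTuples 2 m ↔ (f 0).1 + 2 * (f 1).1 = m := by
    simp [orderkTuples, Fin.sum_univ_two]
  refine sum_bij (fun f _ => (f 1).1) (fun f hf => ?_) (fun f hf g hg hfg => ?_) (fun s hs => ?_)
    fun f hf => ?_
  · have := (mem_iff f).1 hf
    exact mem_range.2 (by omega)
  · have := (mem_iff f).1 hf
    have := (mem_iff g).1 hg
    exact funext (Fin.forall_fin_two.2 ⟨Fin.ext (by omega), Fin.ext hfg⟩)
  · have := mem_range.1 hs
    exact ⟨![⟨m - 2 * s, by omega⟩, ⟨s, by omega⟩],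
      (mem_iff _).2 (show m - 2 * s + 2 * s = m by omega), rfl⟩
  · have := (mem_iff f).1 hf
    rw [Fin.prod_univ_two, show m - 2 * (f 1).1 = (f 0).1 by omega]

end ExpPolynomial

lemma sum_one_add_pow_succ_sub_one {R : Type*} [CommRing R] (k : ℕ) (t : R) :
    ∑ j : Fin k, ((1 + t) ^ (j.1 + 1) - 1) =
      ∑ j : Fin k, (k + 1).choose (j.1 + 2) * t ^ (j.1 + 1) := by
  rw [Fin.sum_univ_eq_sum_range fun j => (1 + t) ^ (j + 1) - 1,
    Fin.sum_univ_eq_sum_range fun j => ((k + 1).choose (j + 2) : R) * t ^ (j + 1)]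
  induction k with
  | zero => rfl
  | succ k ih =>
    have binomial : (1 + t) ^ (k + 1) - 1 =
        ∑ j ∈ range (k + 1), (k + 1).choose (j + 1) * t ^ (j + 1) := by
      rw [add_comm 1 t, add_pow, sum_range_succ']
      simp [mul_comm]
    have pascal (j : ℕ) : ((k + 2).choose (j + 2) : R) * t ^ (j + 1) =
        (k + 1).choose (j + 1) * t ^ (j + 1) + (k + 1).choose (j + 2) * t ^ (j + 1) := by
      rw [Nat.choose_succ_succ, Nat.cast_add, add_mul]
    have drop_top : ∑ j ∈ range (k + 1), ((k + 1).choose (j + 2) : R) * t ^ (j + 1) =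
        ∑ j ∈ range k, ((k + 1).choose (j + 2) : R) * t ^ (j + 1) := by
      rw [sum_range_succ, Nat.choose_succ_self, Nat.cast_zero, zero_mul, add_zero]
    simp only [pascal]
    rw [sum_range_succ, ih, binomial, sum_add_distrib, drop_top, add_comm]

lemma hasSum_poissonOrderK_mul_pow (k : ℕ) (lam z : ℝ) :
    HasSum (fun m => poissonOrderK k lam m * z ^ m)
      (Real.exp (lam * ∑ j : Fin k, (z ^ (j.1 + 1) - 1))) := by
  have exponent : lam * ∑ j : Fin k, (z ^ (j.1 + 1) - 1) =
      -(k * lam) + ∑ j : Fin k, lam * z ^ (j.1 + 1) := by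
    rw [sum_sub_distrib, sum_const, card_univ, Fintype.card_fin, nsmul_one, ← mul_sum]
    ring
  rw [exponent, Real.exp_add]
  simpa only [poissonOrderK, expPolyCoeff, mul_assoc] using
    (hasSum_expPolyCoeff (fun _ : Fin k => lam) z).mul_left (Real.exp (-(k * lam)))

theorem poissonOrderTwo_factorialMoment_general (k : ℕ) (lam : ℝ) (n : ℕ) :
    HasSum (fun m : ℕ => (m.descFactorial n : ℝ) * poissonOrderK k lam m)
      (n ! * expPolyCoeff (fun j : Fin k => lam * (k + 1).choose (j.1 + 2)) n) := by
  have expansion_at_one (t : ℝ) :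
      HasSum
        (fun n => expPolyCoeff (fun j : Fin k => lam * (k + 1).choose (j.1 + 2)) n * t ^ n)
        (Real.exp (lam * ∑ j : Fin k, ((1 + t) ^ (j.1 + 1) - 1))) := by
    rw [sum_one_add_pow_succ_sub_one, mul_sum]
    simpa only [mul_assoc] using
      hasSum_expPolyCoeff (fun j : Fin k => lam * (k + 1).choose (j.1 + 2)) t
  have binomial_moment :=
    hasSum_choose_mul_of_hasSum_add_pow (hasSum_poissonOrderK_mul_pow k lam) expansion_at_one n
  refine (binomial_moment.mul_left (n ! : ℝ)).congr_fun fun m => ?_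
  rw [Nat.descFactorial_eq_factorial_mul_choose, Nat.cast_mul, one_pow]
  ring

lemma factorial_mul_expPolyCoeff_two (lam : ℝ) (n : ℕ) :
    n ! * expPolyCoeff (fun j : Fin 2 => lam * (3 : ℕ).choose (j.1 + 2)) n =
      ∑ s ∈ range (n / 2 + 1),
        (n ! : ℝ) / ((n - 2 * s)! * s !) * ((3 : ℕ).choose 2 : ℝ) ^ (n - 2 * s) *
          ((3 : ℕ).choose 3 : ℝ) ^ s * lam ^ (n - s) := by
  rw [expPolyCoeff_two, mul_sum]
  refine sum_congr rfl fun s hs => ?_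
  have s_lt := mem_range.1 hs
  rw [show n - s = (n - 2 * s) + s by omega, pow_add, mul_pow, mul_pow]
  simp only [Fin.val_zero, Fin.val_one, zero_add, Nat.reduceAdd]
  ring

/-- For `k = 2`, `λ > 0` and `n ≥ 1`, the `n`-th factorial moment of the Poisson
distribution of order 2 is
`M_{(n)}(2,λ) = ∑_{s=0}^{⌊n/2⌋} n!/((n−2s)! s!) κ₁^{n−2s} κ₂^{s} λ^{n−s}`
with `κ₁ = C(3,2) = 3` and `κ₂ = C(3,3) = 1`. -/
theorem poissonOrderTwo_factorialMoment (lam : ℝ) (hlam : 0 < lam) (n : ℕ) (hn : 1 ≤ n) :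
    HasSum (fun m : ℕ => (m.descFactorial n : ℝ) * poissonOrderK 2 lam m)
      (∑ s ∈ Finset.range (n / 2 + 1),
        (n.factorial : ℝ) / ((n - 2 * s).factorial * s.factorial) *
          ((3 : ℕ).choose 2 : ℝ) ^ (n - 2 * s) * ((3 : ℕ).choose 3 : ℝ) ^ s *
          lam ^ (n - s)) := by
  rw [← factorial_mul_expPolyCoeff_two]
  exact poissonOrderTwo_factorialMoment_general 2 lam n
end

section
/- For every integer k ≥ 1 and every real λ > 0, the second factorial moment of the Poisson distribution of order k is M_{(2)}(k,λ) = (k(k+1)/2)² λ² + ((k−1)k(k+1)/3) λ. -/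
open scoped BigOperators

/-- `κ_j = C(k+1, j+1)`, as a real number (it vanishes for `j > k`). -/
noncomputable def kappa (k j : ℕ) : ℝ := ((k + 1).choose (j + 1) : ℝ)

/-!
The Poisson distribution of order `k` is the law of the compound Poisson sum `S = ∑ j, j * N j`,
where `N 1, …, N k` are independent Poisson counts of rate `λ`. For rates `r i` and jumps `c i` in
general, the Mecke equation `E[N i * g N] = r i * E[g (N + e i)]` gives
`E[S * g N] = ∑ i, c i * r i * E[g (N + e i)]`. Taking `g = 1` yields the mean `∑ i, c i * r i`;
taking `g = S - 1`, which shifts to `S + c i - 1`, yields the second factorial moment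
`(∑ i, c i * r i) ^ 2 + ∑ i, c i * (c i - 1) * r i`.
-/

open Finset

section ProdPi

variable {R : Type*} [NormedCommRing R] [CompleteSpace R]

theorem summable_norm_and_hasSum_prod_fin {n : ℕ} {κ : Fin n → Type*} {f : ∀ i, κ i → R}
    (hf : ∀ i, Summable fun x ↦ ‖f i x‖) :
    (Summable fun x : ∀ i, κ i ↦ ‖∏ i, f i (x i)‖) ∧
      HasSum (fun x : ∀ i, κ i ↦ ∏ i, f i (x i)) (∏ i, ∑' y, f i y) := by
  induction n with
  | zero => exact ⟨(hasSum_unique _).summable, by simp⟩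
  | succ n ih =>
    obtain ⟨htail, hsum_tail⟩ := ih fun i ↦ hf i.succ
    have hnorm := (hf 0).mul_norm htail
    have hsum := (hf 0).of_norm.hasSum.mul hsum_tail hnorm.of_norm
    have hprod (x : κ 0 × ∀ i : Fin n, κ i.succ) :
        ∏ i, f i (Fin.consEquiv κ x i) = f 0 x.1 * ∏ i : Fin n, f i.succ (x.2 i) :=
      Fin.prod_univ_succ _
    rw [← (Fin.consEquiv κ).summable_iff, ← (Fin.consEquiv κ).hasSum_iff, Fin.prod_univ_succ]
    simpa only [Function.comp_def, hprod] using ⟨hnorm, hsum⟩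

theorem hasSum_prod_pi_of_summable_norm {ι : Type*} [Fintype ι] {κ : ι → Type*}
    {f : ∀ i, κ i → R} (hf : ∀ i, Summable fun x ↦ ‖f i x‖) :
    HasSum (fun x : ∀ i, κ i ↦ ∏ i, f i (x i)) (∏ i, ∑' y, f i y) := by
  let e := (Fintype.equivFin ι).symm
  have hprod (x : ∀ j, κ (e j)) : ∏ i, f i (e.piCongrLeft κ x i) = ∏ j, f (e j) (x j) := by
    simp [← e.prod_comp]
  rw [← (e.piCongrLeft κ).hasSum_iff, ← e.prod_comp]
  simpa only [Function.comp_def, hprod] using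
    (summable_norm_and_hasSum_prod_fin fun j ↦ hf (e j)).2

end ProdPi

section CompoundPoisson

variable {ι : Type*} [Fintype ι]

/-- The joint weight `∏ᵢ rᵢ ^ nᵢ / nᵢ!` of independent Poisson counts `nᵢ` with rates `rᵢ`, without
the normalizing factor `exp (-∑ᵢ rᵢ)`. The rates may be negative, giving signed weights. -/
noncomputable def poissonWeight (r : ι → ℝ) (n : ι → ℕ) : ℝ :=
  ∏ i, r i ^ n i / (n i).factorial

/-- The compound Poisson sum `∑ᵢ cᵢ nᵢ`, in which each of the `nᵢ` events of type `i` contributes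
a jump of size `cᵢ`. -/
def compoundSum (c : ι → ℝ) (n : ι → ℕ) : ℝ :=
  ∑ i, c i * n i

theorem hasSum_poissonWeight (r : ι → ℝ) :
    HasSum (poissonWeight r) (Real.exp (∑ i, r i)) := by
  have hexp (x : ℝ) : ∑' n : ℕ, x ^ n / n.factorial = Real.exp x := by
    rw [Real.exp_eq_exp_ℝ, (NormedSpace.expSeries_div_hasSum_exp x).tsum_eq]
  simpa only [Real.exp_sum, hexp, poissonWeight] using!
    hasSum_prod_pi_of_summable_norm fun i ↦ NormedSpace.norm_expSeries_div_summable (r i)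

theorem poissonWeight_add_single [DecidableEq ι] (r : ι → ℝ) (n : ι → ℕ) (i : ι) :
    ((n i : ℝ) + 1) * poissonWeight r (n + Pi.single i 1) = r i * poissonWeight r n := by
  have hne : ∏ j ∈ univ.erase i, r j ^ (n + Pi.single i 1 : ι → ℕ) j /
        ((n + Pi.single i 1 : ι → ℕ) j).factorial =
      ∏ j ∈ univ.erase i, r j ^ n j / (n j).factorial :=
    prod_congr rfl fun j hj ↦ by simp [ne_of_mem_erase hj]
  rw [poissonWeight, poissonWeight, ← mul_prod_erase univ _ (mem_univ i), hne,
    ← mul_prod_erase univ (fun j ↦ r j ^ n j / _) (mem_univ i)]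
  simp only [Pi.add_apply, Pi.single_eq_same, Nat.factorial_succ, pow_succ]
  push_cast
  field_simp

theorem compoundSum_add_single [DecidableEq ι] (c : ι → ℝ) (n : ι → ℕ) (i : ι) :
    compoundSum c (n + Pi.single i 1) = compoundSum c n + c i := by
  simp [compoundSum, mul_add, sum_add_distrib, Pi.single_apply]

/-- The Mecke equation of the Poisson law, before normalization. -/
theorem hasSum_apply_mul_poissonWeight [DecidableEq ι] {r : ι → ℝ} {g : (ι → ℕ) → ℝ} {a : ℝ} (i : ι)
    (h : HasSum (fun n ↦ g (n + Pi.single i 1) * poissonWeight r n) a) :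
    HasSum (fun n ↦ n i * g n * poissonWeight r n) (r i * a) := by
  have hzero (n : ι → ℕ) (hn : n ∉ Set.range fun m : ι → ℕ ↦ m + Pi.single i 1) :
      n i * g n * poissonWeight r n = 0 := by
    suffices n i = 0 by simp [this]
    by_contra hi
    exact hn ⟨n - Pi.single i 1, tsub_add_cancel_of_le <| by
      simpa [Pi.single, update_le_iff, Nat.one_le_iff_ne_zero] using hi⟩
  refine ((add_left_injective (Pi.single i 1)).hasSum_iff hzero).mp ?_
  refine (h.mul_left (r i)).congr_fun fun n ↦ ?_
  simp only [Function.comp_apply, Pi.add_apply, Pi.single_eq_same]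
  push_cast
  linear_combination g (n + Pi.single i 1) * poissonWeight_add_single r n i

theorem hasSum_compoundSum_mul_poissonWeight [DecidableEq ι] {r : ι → ℝ} {g : (ι → ℕ) → ℝ}
    {a : ι → ℝ} (c : ι → ℝ)
    (h : ∀ i, HasSum (fun n ↦ g (n + Pi.single i 1) * poissonWeight r n) (a i)) :
    HasSum (fun n ↦ compoundSum c n * g n * poissonWeight r n) (∑ i, c i * (r i * a i)) := by
  simpa only [compoundSum, sum_mul, mul_assoc] using
    hasSum_sum fun i _ ↦ (hasSum_apply_mul_poissonWeight i (h i)).mul_left (c i)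

theorem hasSum_compoundSum_poissonWeight (c r : ι → ℝ) :
    HasSum (fun n ↦ compoundSum c n * poissonWeight r n)
      ((∑ i, c i * r i) * Real.exp (∑ i, r i)) := by
  classical
  simpa [sum_mul, mul_assoc] using hasSum_compoundSum_mul_poissonWeight (g := 1) c fun i ↦ by
    simpa using hasSum_poissonWeight r

theorem hasSum_compoundSum_mul_sub_one_poissonWeight (c r : ι → ℝ) :
    HasSum (fun n ↦ compoundSum c n * (compoundSum c n - 1) * poissonWeight r n)
      (((∑ i, c i * r i) ^ 2 + ∑ i, c i * (c i - 1) * r i) * Real.exp (∑ i, r i)) := by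
  classical
  have hshift (i : ι) : HasSum
      (fun n ↦ (compoundSum c (n + Pi.single i 1) - 1) * poissonWeight r n)
      ((∑ j, c j * r j) * Real.exp (∑ j, r j) + (c i - 1) * Real.exp (∑ j, r j)) := by
    refine ((hasSum_compoundSum_poissonWeight c r).add
      ((hasSum_poissonWeight r).mul_left (c i - 1))).congr_fun fun n ↦ ?_
    rw [compoundSum_add_single]
    ring
  have hvalue : ((∑ i, c i * r i) ^ 2 + ∑ i, c i * (c i - 1) * r i) * Real.exp (∑ i, r i) =
      ∑ i, c i * (r i * ((∑ j, c j * r j) * Real.exp (∑ j, r j) +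
        (c i - 1) * Real.exp (∑ j, r j))) := by
    rw [sq, sum_mul, ← sum_add_distrib, sum_mul]
    exact sum_congr rfl fun i _ ↦ by ring
  rw [hvalue]
  exact hasSum_compoundSum_mul_poissonWeight c hshift

end CompoundPoisson

section OrderK

theorem coe_map_orderkTuples (k m : ℕ) :
    ((orderkTuples k m).map Fin.valEmbedding.arrowCongrRight : Set (Fin k → ℕ)) =
      (fun n ↦ ∑ j, (j.1 + 1) * n j) ⁻¹' {m} := by
  ext n
  simp only [coe_map, Set.mem_image, mem_coe, orderkTuples, mem_filter, mem_univ, true_and,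
    Set.mem_preimage, Set.mem_singleton_iff]
  constructor
  · rintro ⟨f, hf, rfl⟩
    exact hf
  · intro hn
    have hlt (j : Fin k) : n j < m + 1 := Nat.lt_succ_of_le <|
      calc n j ≤ (j.1 + 1) * n j := Nat.le_mul_of_pos_left _ j.1.succ_pos
        _ ≤ ∑ i : Fin k, (i.1 + 1) * n i :=
          single_le_sum (f := fun i : Fin k ↦ (i.1 + 1) * n i) (fun _ _ ↦ Nat.zero_le _)
            (mem_univ j)
        _ = m := hn
    exact ⟨fun j ↦ ⟨n j, hlt j⟩, hn, rfl⟩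

theorem hasSum_sum_orderkTuples {k : ℕ} {E : Type*} [AddCommMonoid E] [TopologicalSpace E]
    [ContinuousAdd E] [RegularSpace E] {F : (Fin k → ℕ) → E} {a : E} (h : HasSum F a) :
    HasSum (fun m ↦ ∑ f ∈ orderkTuples k m, F fun j ↦ f j) a := by
  let size (n : Fin k → ℕ) : ℕ := ∑ j, (j.1 + 1) * n j
  refine ((Equiv.sigmaFiberEquiv size).hasSum_iff.mpr h).sigma fun m ↦ ?_
  have hfiber := ((orderkTuples k m).map Fin.valEmbedding.arrowCongrRight).hasSum F
  rw [sum_map] at hfiber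
  rwa [coe_map_orderkTuples] at hfiber

theorem poissonOrderK_eq_sum_poissonWeight (k : ℕ) (lam : ℝ) (m : ℕ) :
    poissonOrderK k lam m =
      Real.exp (-(k * lam)) * ∑ f ∈ orderkTuples k m, poissonWeight (fun _ ↦ lam) fun j ↦ f j :=
  rfl

theorem compoundSum_of_mem_orderkTuples {k m : ℕ} {f : Fin k → Fin (m + 1)}
    (hf : f ∈ orderkTuples k m) :
    compoundSum (fun j : Fin k ↦ (j : ℝ) + 1) (fun j ↦ f j) = m := by
  have hsum : ∑ j, (j.1 + 1) * (f j : ℕ) = m := (mem_filter.mp hf).2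
  rw [compoundSum]
  exact_mod_cast hsum

theorem sum_fin_val_add_one (k : ℕ) : ∑ j : Fin k, ((j : ℝ) + 1) = k * (k + 1) / 2 := by
  induction k with
  | zero => simp
  | succ k ih =>
    simp only [Fin.sum_univ_castSucc, Fin.val_castSucc, Fin.val_last, ih]
    push_cast
    ring

theorem sum_fin_val_add_one_mul_val (k : ℕ) :
    ∑ j : Fin k, ((j : ℝ) + 1) * j = (k - 1) * k * (k + 1) / 3 := by
  induction k with
  | zero => simp
  | succ k ih =>
    simp only [Fin.sum_univ_castSucc, Fin.val_castSucc, Fin.val_last, ih]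
    push_cast
    ring

theorem hasSum_descFactorial_two_mul_sum_orderkTuples (k : ℕ) (lam : ℝ) :
    HasSum (fun m : ℕ ↦ (m.descFactorial 2 : ℝ) *
        ∑ f ∈ orderkTuples k m, poissonWeight (fun _ ↦ lam) fun j ↦ f j)
      ((((k : ℝ) * (k + 1) / 2) ^ 2 * lam ^ 2 + ((k : ℝ) - 1) * k * (k + 1) / 3 * lam) *
        Real.exp (k * lam)) := by
  convert! hasSum_sum_orderkTuples (hasSum_compoundSum_mul_sub_one_poissonWeight
    (fun j : Fin k ↦ (j : ℝ) + 1) fun _ ↦ lam) using 1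
  · ext m
    rw [Nat.cast_descFactorial_two, mul_sum]
    exact sum_congr rfl fun f hf ↦ by rw [compoundSum_of_mem_orderkTuples hf]
  · simp only [add_sub_cancel_right, ← sum_mul, sum_fin_val_add_one, sum_fin_val_add_one_mul_val,
      sum_const, card_univ, Fintype.card_fin, nsmul_eq_mul, mul_pow]

theorem poissonOrderK_secondFactorialMoment_general (k : ℕ) (lam : ℝ) :
    HasSum (fun m : ℕ ↦ (m.descFactorial 2 : ℝ) * poissonOrderK k lam m)
      (((k : ℝ) * (k + 1) / 2) ^ 2 * lam ^ 2 + ((k : ℝ) - 1) * k * (k + 1) / 3 * lam) := by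
  convert! (hasSum_descFactorial_two_mul_sum_orderkTuples k lam).mul_left
    (Real.exp (-(k * lam))) using 1
  · ext m
    rw [poissonOrderK_eq_sum_poissonWeight, mul_left_comm]
  · rw [mul_left_comm, ← Real.exp_add, neg_add_cancel, Real.exp_zero, mul_one]

end OrderK

/-- The second factorial moment of the Poisson distribution of order `k` is
`M_{(2)}(k,λ) = (k(k+1)/2)² λ² + ((k−1)k(k+1)/3) λ`. -/
theorem poissonOrderK_secondFactorialMoment (k : ℕ) (hk : 1 ≤ k) (lam : ℝ) (hlam : 0 < lam) :
    HasSum (fun m : ℕ => (m.descFactorial 2 : ℝ) * poissonOrderK k lam m)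
      (((k : ℝ) * (k + 1) / 2) ^ 2 * lam ^ 2 + ((k : ℝ) - 1) * k * (k + 1) / 3 * lam) :=
  poissonOrderK_secondFactorialMoment_general k lam
end
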